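/- arXiv:1511.07193 — 2 statements merged into one kernel-verified Lean document; each statement's English description precedes it below -/
import Mathlib

section
/- There exists a constant C > 0 such that for every m ≥ 1, N = 2^m, and every function u that is four times continuously differentiable on a neighbourhood of [0,1]² and vanishes on the boundary of [0,1]², taking the maximal level k̃ = log₂(N) − 1 = m − 1, the multiscale interpolant satisfies |||u − I^{(k̃)}_{N,N}u||| ≤ C N^{−1} ( |u|₂ + ‖∂⁴u/∂x²∂y²‖_{0,Ω} ). -/
open MeasureTheory Finset

noncomputable section

/-- The hat function `ψ_i^N` on the uniform mesh of `[0,1]` with `N` intervals. -/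
def hat (N i : ℕ) (x : ℝ) : ℝ :=
  if ((i : ℝ) - 1) / N ≤ x ∧ x ≤ (i : ℝ) / N then N * (x - ((i : ℝ) - 1) / N)
  else if (i : ℝ) / N ≤ x ∧ x ≤ ((i : ℝ) + 1) / N then N * (((i : ℝ) + 1) / N - x)
  else 0

/-- The nodal piecewise bilinear interpolant `I_{Nx,Ny} u`. -/
def interp (Nx Ny : ℕ) (u : ℝ × ℝ → ℝ) : ℝ × ℝ → ℝ := fun p =>
  ∑ i ∈ range (Nx + 1), ∑ j ∈ range (Ny + 1),
    u ((i : ℝ) / Nx, (j : ℝ) / Ny) * hat Nx i p.1 * hat Ny j p.2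

/-- The one-directional interpolant `I_{Nx,0} u` (interpolation in the `x`-direction only). -/
def interpX (Nx : ℕ) (u : ℝ × ℝ → ℝ) : ℝ × ℝ → ℝ := fun p =>
  ∑ i ∈ range (Nx + 1), u ((i : ℝ) / Nx, p.2) * hat Nx i p.1

/-- The one-directional interpolant `I_{0,Ny} u` (interpolation in the `y`-direction only). -/
def interpY (Ny : ℕ) (u : ℝ × ℝ → ℝ) : ℝ × ℝ → ℝ := fun p =>
  ∑ j ∈ range (Ny + 1), u (p.1, (j : ℝ) / Ny) * hat Ny j p.2

/-- The two-scale interpolant `Î_{N,N} u = I_{N,σ}u + I_{σ,N}u − I_{σ,σ}u`. -/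
def twoScale (N σ : ℕ) (u : ℝ × ℝ → ℝ) : ℝ × ℝ → ℝ := fun p =>
  interp N σ u p + interp σ N u p - interp σ σ u p

/-- The multiscale interpolant
`I^{(k)}_{N,N} u = Σ_{i=0}^{k} I_{N/2^i, N/2^{k−i}}u − Σ_{i=1}^{k} I_{N/2^i, N/2^{k+1−i}}u`. -/
def msInterp (N k : ℕ) (u : ℝ × ℝ → ℝ) : ℝ × ℝ → ℝ := fun p =>
  ∑ i ∈ range (k + 1), interp (N / 2 ^ i) (N / 2 ^ (k - i)) u p
    - ∑ i ∈ Finset.Icc 1 k, interp (N / 2 ^ i) (N / 2 ^ (k + 1 - i)) u p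

/-- The closed square `[0,1]²`. -/
def unitSquare : Set (ℝ × ℝ) := Set.Icc (0 : ℝ) 1 ×ˢ Set.Icc (0 : ℝ) 1

/-- The open square `Ω = (0,1)²`. -/
def Omega2 : Set (ℝ × ℝ) := Set.Ioo (0 : ℝ) 1 ×ˢ Set.Ioo (0 : ℝ) 1

/-- Partial derivative in `x` (defined a.e. for Lipschitz functions; junk value `0` elsewhere). -/
def pderivX (v : ℝ × ℝ → ℝ) : ℝ × ℝ → ℝ := fun p => deriv (fun x => v (x, p.2)) p.1

/-- Partial derivative in `y` (defined a.e. for Lipschitz functions; junk value `0` elsewhere). -/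
def pderivY (v : ℝ × ℝ → ℝ) : ℝ × ℝ → ℝ := fun p => deriv (fun y => v (p.1, y)) p.2

/-- The `L²(Ω)` norm `‖v‖_{0,Ω}`. -/
def L2norm (v : ℝ × ℝ → ℝ) : ℝ := Real.sqrt (∫ p in Omega2, (v p) ^ 2)

/-- The energy norm `|||v||| = (∫_Ω |∇v|² + ∫_Ω v²)^{1/2}`, gradients taken a.e. -/
def energyNorm (v : ℝ × ℝ → ℝ) : ℝ :=
  Real.sqrt (∫ p in Omega2, ((pderivX v p) ^ 2 + (pderivY v p) ^ 2 + (v p) ^ 2))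

/-- `u` is four times continuously differentiable on a neighbourhood of `[0,1]²`. -/
def C4Near (u : ℝ × ℝ → ℝ) : Prop :=
  ∃ U : Set (ℝ × ℝ), IsOpen U ∧ unitSquare ⊆ U ∧ ContDiffOn ℝ 4 u U

/-- `u` vanishes on the boundary of `[0,1]²`. -/
def VanishOnBoundary (u : ℝ × ℝ → ℝ) : Prop :=
  ∀ p ∈ unitSquare, (p.1 = 0 ∨ p.1 = 1 ∨ p.2 = 0 ∨ p.2 = 1) → u p = 0

/-- The seminorm `|u|₂ = ‖u_xx‖_{0,Ω} + ‖u_xy‖_{0,Ω} + ‖u_yy‖_{0,Ω}`. -/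
def semi2 (u : ℝ × ℝ → ℝ) : ℝ :=
  L2norm (pderivX (pderivX u)) + L2norm (pderivX (pderivY u)) + L2norm (pderivY (pderivY u))

/-- The mixed fourth derivative `∂⁴u/∂x²∂y²`. -/
def uxxyy (u : ℝ × ℝ → ℝ) : ℝ × ℝ → ℝ := pderivX (pderivX (pderivY (pderivY u)))

/-- The bilinear form `B(v,w) = ∫_Ω ∇v·∇w + ∫_Ω v w`, gradients taken a.e. -/
def Bform (v w : ℝ × ℝ → ℝ) : ℝ :=
  ∫ p in Omega2, (pderivX v p * pderivX w p + pderivY v p * pderivY w p + v p * w p)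

/-! Write `E_a u` and `F_b u` for the errors of piecewise linear interpolation of `u` in the first
variable with `a` cells and in the second variable with `b` cells. Then
`I_{a,b} u = u - E_a u - F_b u + E_a F_b u`. In the signed combination defining `I^{(k)}_{N,N}`, a
quantity depending on only one of the two mesh sizes telescopes to its value at `N`, so
`u - I^{(k)}_{N,N} u = E_N u + F_N u - ∑ ± E_a F_b u`.
The first two terms are classical. Each mixed term `E_a F_b u`, together with its derivative in `x`,
is of size `a⁻¹ b⁻² ‖u_xxyy‖` with `a b ≥ N / 2`, that is `2 N⁻¹ b⁻¹ ‖u_xxyy‖`, and `b` runs through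
a geometric progression, so the sum over all levels stays of order `N⁻¹`. The derivative in `y` is
treated by exchanging the coordinates. -/

open scoped ENNReal

section Measure

variable {α β E F : Type*} [MeasurableSpace α] [MeasurableSpace β] [NormedAddCommGroup E]
  [NormedAddCommGroup F] {p c : ℝ≥0∞}

theorem eLpNorm_le_of_ae_enorm_le_lintegral {μ : Measure α} {g : α → E} {φ : α → F} (hp : 1 ≤ p)
    (hφ : AEStronglyMeasurable φ μ) (h : ∀ᵐ x ∂μ, ‖g x‖ₑ ≤ c * ∫⁻ y, ‖φ y‖ₑ ∂μ) :
    eLpNorm g p μ ≤ c * μ Set.univ * eLpNorm φ p μ := by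
  have holder : ∫⁻ y, ‖φ y‖ₑ ∂μ ≤ eLpNorm φ p μ * μ Set.univ ^ (1 - p.toReal⁻¹) := by
    simpa only [eLpNorm_one_eq_lintegral_enorm, ENNReal.toReal_one, one_div, inv_one]
      using eLpNorm_le_eLpNorm_mul_rpow_measure_univ hp hφ
  have hp_inv : p.toReal⁻¹ ≤ 1 := by
    rw [← ENNReal.toReal_inv]
    exact ENNReal.toReal_le_of_le_ofReal zero_le_one (by simpa using hp)
  calc eLpNorm g p μ
      ≤ c * (∫⁻ y, ‖φ y‖ₑ ∂μ) * μ Set.univ ^ p.toReal⁻¹ := eLpNorm_le_of_ae_enorm_bound h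
    _ ≤ c * (eLpNorm φ p μ * μ Set.univ ^ (1 - p.toReal⁻¹)) * μ Set.univ ^ p.toReal⁻¹ := by gcongr
    _ = c * (μ Set.univ ^ (1 - p.toReal⁻¹) * μ Set.univ ^ p.toReal⁻¹) * eLpNorm φ p μ := by ring
    _ = c * μ Set.univ * eLpNorm φ p μ := by
      rw [← ENNReal.rpow_add_of_nonneg _ _ (sub_nonneg.2 hp_inv) (by positivity),
        sub_add_cancel, ENNReal.rpow_one]

theorem eLpNorm_le_mul_eLpNorm_iff {μ : Measure α} {g : α → E} {φ : α → F} (hp0 : p ≠ 0)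
    (hp : p ≠ ∞) :
    eLpNorm g p μ ≤ c * eLpNorm φ p μ ↔
      ∫⁻ x, ‖g x‖ₑ ^ p.toReal ∂μ ≤ c ^ p.toReal * ∫⁻ x, ‖φ x‖ₑ ^ p.toReal ∂μ := by
  have hp_pos := ENNReal.toReal_pos hp0 hp
  rw [eLpNorm_eq_lintegral_rpow_enorm_toReal hp0 hp, eLpNorm_eq_lintegral_rpow_enorm_toReal hp0 hp,
    ← ENNReal.rpow_le_rpow_iff hp_pos, ENNReal.mul_rpow_of_nonneg _ _ hp_pos.le, one_div,
    ENNReal.rpow_inv_rpow hp_pos.ne', ENNReal.rpow_inv_rpow hp_pos.ne']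

theorem eLpNorm_sum_measure_le {ι : Type*} {s : Finset ι} {μ : ι → Measure α} {g : α → E}
    {φ : α → F} (hp0 : p ≠ 0) (hp : p ≠ ∞)
    (h : ∀ i ∈ s, eLpNorm g p (μ i) ≤ c * eLpNorm φ p (μ i)) :
    eLpNorm g p (∑ i ∈ s, μ i) ≤ c * eLpNorm φ p (∑ i ∈ s, μ i) := by
  simp only [eLpNorm_le_mul_eLpNorm_iff hp0 hp, lintegral_finsetSum_measure, mul_sum] at h ⊢
  exact sum_le_sum h

theorem eLpNorm_prod_le_of_slices {μ : Measure α} {ν : Measure β} [SFinite μ] [SFinite ν]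
    {G : α × β → E} {Φ : α × β → F} (hp0 : p ≠ 0) (hp : p ≠ ∞)
    (hG : AEStronglyMeasurable G (μ.prod ν)) (hΦ : AEStronglyMeasurable Φ (μ.prod ν))
    (h : ∀ y, eLpNorm (fun x => G (x, y)) p μ ≤ c * eLpNorm (fun x => Φ (x, y)) p μ) :
    eLpNorm G p (μ.prod ν) ≤ c * eLpNorm Φ p (μ.prod ν) := by
  rw [eLpNorm_le_mul_eLpNorm_iff hp0 hp, lintegral_prod_symm _ (hG.enorm.pow_const _),
    lintegral_prod_symm _ (hΦ.enorm.pow_const _)]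
  calc ∫⁻ y, ∫⁻ x, ‖G (x, y)‖ₑ ^ p.toReal ∂μ ∂ν
      ≤ ∫⁻ y, c ^ p.toReal * ∫⁻ x, ‖Φ (x, y)‖ₑ ^ p.toReal ∂μ ∂ν :=
        lintegral_mono fun y => (eLpNorm_le_mul_eLpNorm_iff hp0 hp).1 (h y)
    _ = c ^ p.toReal * ∫⁻ y, ∫⁻ x, ‖Φ (x, y)‖ₑ ^ p.toReal ∂μ ∂ν :=
        lintegral_const_mul'' _ (hΦ.enorm.pow_const _).lintegral_prod_left'

theorem eLpNorm_sum_le_of_geometric {μ : Measure α} {f : ℕ → α → E} {n : ℕ} (hp : 1 ≤ p)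
    (hf : ∀ i < n, AEStronglyMeasurable (f i) μ) (h : ∀ i < n, eLpNorm (f i) p μ ≤ c * 2⁻¹ ^ i) :
    eLpNorm (∑ i ∈ range n, f i) p μ ≤ 2 * c := by
  calc eLpNorm (∑ i ∈ range n, f i) p μ
      ≤ ∑ i ∈ range n, eLpNorm (f i) p μ := eLpNorm_sum_le (by simpa using hf) hp
    _ ≤ ∑ i ∈ range n, c * 2⁻¹ ^ i := sum_le_sum fun i hi => h i (mem_range.1 hi)
    _ = c * ∑ i ∈ range n, 2⁻¹ ^ i := (mul_sum ..).symm
    _ ≤ c * ∑' i, 2⁻¹ ^ i := by gcongr; exact ENNReal.sum_le_tsum _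
    _ = 2 * c := by rw [ENNReal.tsum_geometric_two, mul_comm]

theorem restrict_Ioc_eq_sum_restrict {t : ℕ → ℝ} (ht : Monotone t) (μ : Measure ℝ) (n : ℕ) :
    μ.restrict (Set.Ioc (t 0) (t n)) =
      ∑ i ∈ range n, μ.restrict (Set.Ioc (t i) (t (i + 1))) := by
  induction n with
  | zero => simp
  | succ n ih =>
    rw [sum_range_succ, ← ih, ← Measure.restrict_union (Set.Ioc_disjoint_Ioc_of_le le_rfl)
      measurableSet_Ioc, Set.Ioc_union_Ioc_eq_Ioc (ht (Nat.zero_le n)) (ht n.le_succ)]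

end Measure

section Secant

variable {f : ℝ → ℝ} {a b x y : ℝ}

theorem enorm_sub_le_lintegral_deriv {E : Type*} [NormedAddCommGroup E] [NormedSpace ℝ E]
    {f : ℝ → E} (hf : ContDiff ℝ 1 f) (hx : x ∈ Set.Icc a b) (hy : y ∈ Set.Icc a b) :
    ‖f x - f y‖ₑ ≤ ∫⁻ t in Set.Icc a b, ‖deriv f t‖ₑ := by
  wlog hyx : y ≤ x generalizing x y
  · rw [← neg_sub, enorm_neg]
    exact this hy hx (le_of_not_ge hyx)
  · exact (enorm_sub_le_lintegral_deriv_of_contDiffOn_Icc hf.contDiffOn hyx).trans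
      (lintegral_mono_set (Set.Icc_subset_Icc hy.1 hx.2))

/-- The error of interpolating `f` at the two nodes `a` and `b` by an affine function. -/
def secantErr (a b : ℝ) (f : ℝ → ℝ) (x : ℝ) : ℝ := f x - (f a + slope f a b * (x - a))

theorem secantErr_left : secantErr a b f a = 0 := by
  simp [secantErr]

theorem secantErr_right : secantErr a b f b = 0 := by
  have := sub_smul_slope f a b
  simp only [smul_eq_mul, vsub_eq_sub] at this
  rw [secantErr, mul_comm, this]
  ring

theorem contDiff_secantErr {n : WithTop ℕ∞} (hf : ContDiff ℝ n f) :
    ContDiff ℝ n (secantErr a b f) := by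
  unfold secantErr
  fun_prop

theorem deriv_secantErr (hf : DifferentiableAt ℝ f x) :
    deriv (secantErr a b f) x = deriv f x - slope f a b := by
  have hline : HasDerivAt (fun x => f a + slope f a b * (x - a)) (slope f a b) x := by
    simpa using (((hasDerivAt_id x).sub_const a).const_mul (slope f a b)).const_add (f a)
  exact (hf.hasDerivAt.sub hline).deriv

theorem enorm_secantErr_le_lintegral_deriv (hf : ContDiff ℝ 1 f) (hx : x ∈ Set.Icc a b) :
    ‖secantErr a b f x‖ₑ ≤ ∫⁻ t in Set.Icc a b, ‖deriv f t‖ₑ := by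
  have hab : a ≤ b := hx.1.trans hx.2
  have hline : f a + slope f a b * (x - a) ∈ Set.uIcc (f a) (f b) := by
    rw [← segment_eq_uIcc]
    refine ⟨1 - (x - a) / (b - a), (x - a) / (b - a), ?_, ?_, by ring, ?_⟩
    · linarith [div_le_one_of_le₀ (sub_le_sub_right hx.2 a) (sub_nonneg.2 hab)]
    · exact div_nonneg (sub_nonneg.2 hx.1) (sub_nonneg.2 hab)
    · simp only [slope_def_field, smul_eq_mul]
      ring
  obtain ⟨ξ, hξ, hfξ⟩ := intermediate_value_uIcc hf.continuous.continuousOn hline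
  rw [secantErr, ← hfξ]
  exact enorm_sub_le_lintegral_deriv hf hx (Set.uIcc_of_le hab ▸ hξ)

theorem enorm_deriv_secantErr_le_lintegral_deriv_deriv (hf : ContDiff ℝ 2 f) (hab : a < b)
    (hx : x ∈ Set.Icc a b) :
    ‖deriv (secantErr a b f) x‖ₑ ≤ ∫⁻ t in Set.Icc a b, ‖deriv (deriv f) t‖ₑ := by
  obtain ⟨ξ, hξ, hderiv⟩ := exists_deriv_eq_zero hab
    (contDiff_secantErr (a := a) (b := b) hf).continuous.continuousOn
    (secantErr_left.trans secantErr_right.symm)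
  have hdiff : Differentiable ℝ f := hf.differentiable two_ne_zero
  calc ‖deriv (secantErr a b f) x‖ₑ
      = ‖deriv (secantErr a b f) x - deriv (secantErr a b f) ξ‖ₑ := by rw [hderiv, sub_zero]
    _ = ‖deriv f x - deriv f ξ‖ₑ := by
        rw [deriv_secantErr hdiff.differentiableAt, deriv_secantErr hdiff.differentiableAt,
          sub_sub_sub_cancel_right]
    _ ≤ ∫⁻ t in Set.Icc a b, ‖deriv (deriv f) t‖ₑ :=
        enorm_sub_le_lintegral_deriv hf.deriv' hx (Set.Ioo_subset_Icc_self hξ)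

theorem enorm_secantErr_le_lintegral_deriv_deriv (hf : ContDiff ℝ 2 f) (hab : a < b)
    (hx : x ∈ Set.Icc a b) :
    ‖secantErr a b f x‖ₑ ≤
      ENNReal.ofReal (b - a) * ∫⁻ t in Set.Icc a b, ‖deriv (deriv f) t‖ₑ := by
  calc ‖secantErr a b f x‖ₑ
      = ‖secantErr a b f x - secantErr a b f a‖ₑ := by rw [secantErr_left, sub_zero]
    _ ≤ ∫⁻ t in Set.Icc a b, ‖deriv (secantErr a b f) t‖ₑ :=
        enorm_sub_le_lintegral_deriv (contDiff_secantErr (hf.of_le one_le_two)) hx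
          (Set.left_mem_Icc.2 hab.le)
    _ ≤ ∫⁻ _ in Set.Icc a b, ∫⁻ t in Set.Icc a b, ‖deriv (deriv f) t‖ₑ :=
        setLIntegral_mono' measurableSet_Icc fun t ht =>
          enorm_deriv_secantErr_le_lintegral_deriv_deriv hf hab ht
    _ = ENNReal.ofReal (b - a) * ∫⁻ t in Set.Icc a b, ‖deriv (deriv f) t‖ₑ := by
        rw [setLIntegral_const, Real.volume_Icc, mul_comm]

end Secant

section LinearInterpolation

variable {n i : ℕ} {f g : ℝ → ℝ} {x : ℝ} {p : ℝ≥0∞}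

theorem hat_eq_max (hn : 0 < n) (i : ℕ) (x : ℝ) : hat n i x = max 0 (1 - |n * x - i|) := by
  have hn' : (0 : ℝ) < n := by exact_mod_cast hn
  have left_le : ((i : ℝ) - 1) / n ≤ x ↔ (i : ℝ) - 1 ≤ n * x := by rw [div_le_iff₀' hn']
  have le_mid : x ≤ (i : ℝ) / n ↔ n * x ≤ i := by rw [le_div_iff₀' hn']
  have mid_le : (i : ℝ) / n ≤ x ↔ (i : ℝ) ≤ n * x := by rw [div_le_iff₀' hn']
  have le_right : x ≤ ((i : ℝ) + 1) / n ↔ n * x ≤ i + 1 := by rw [le_div_iff₀' hn']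
  have rising : (n : ℝ) * (x - ((i : ℝ) - 1) / n) = n * x - (i - 1) := by field_simp
  have falling : (n : ℝ) * (((i : ℝ) + 1) / n - x) = i + 1 - n * x := by field_simp
  simp only [hat, left_le, le_mid, mid_le, le_right, rising, falling]
  split_ifs with hl hr
  · rw [abs_of_nonpos (by linarith), max_eq_right (by linarith)]
    ring
  · rw [abs_of_nonneg (by linarith), max_eq_right (by linarith)]
    ring
  · rw [max_eq_left]
    by_contra! hlt
    obtain ⟨hlow, hupp⟩ := abs_lt.1 (show |(n : ℝ) * x - i| < 1 by linarith)
    rcases le_total ((n : ℝ) * x) i with h | h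
    · exact hl ⟨by linarith, h⟩
    · exact hr ⟨h, by linarith⟩

theorem continuous_hat (hn : 0 < n) (i : ℕ) : Continuous (hat n i) := by
  rw [funext (hat_eq_max hn i)]
  fun_prop

/-- The univariate piecewise linear interpolant on the uniform mesh of `[0,1]` with `n` cells. -/
def linInterp (n : ℕ) (f : ℝ → ℝ) (x : ℝ) : ℝ :=
  ∑ i ∈ range (n + 1), f ((i : ℝ) / n) * hat n i x

/-- The error of univariate piecewise linear interpolation. -/
def linErr (n : ℕ) (f : ℝ → ℝ) (x : ℝ) : ℝ := f x - linInterp n f x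

/-- The `i`-th closed cell of the uniform mesh of `[0,1]` with `n` cells, counted from `0`. -/
def meshCell (n i : ℕ) : Set ℝ := Set.Icc ((i : ℝ) / n) (((i : ℝ) + 1) / n)

theorem meshCell_lt (hn : 0 < n) (i : ℕ) : (i : ℝ) / n < ((i : ℝ) + 1) / n := by
  gcongr
  exact lt_add_one _

theorem linInterp_of_mem_meshCell (hi : i < n) (hx : x ∈ meshCell n i) :
    linInterp n f x = f (i / n) * (i + 1 - n * x) + f ((i + 1) / n) * (n * x - i) := by
  have hn : 0 < n := Nat.zero_lt_of_lt hi
  have hn' : (0 : ℝ) < n := by exact_mod_cast hn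
  have hlow : (i : ℝ) ≤ n * x := (div_le_iff₀' hn').1 hx.1
  have hupp : n * x ≤ (i : ℝ) + 1 := (le_div_iff₀' hn').1 hx.2
  rw [linInterp, sum_eq_add i (i + 1) i.lt_succ_self.ne]
  · rw [hat_eq_max hn, hat_eq_max hn]
    push_cast
    rw [abs_of_nonneg (by linarith), abs_of_nonpos (by linarith), max_eq_right (by linarith),
      max_eq_right (by linarith)]
    ring
  · intro j _ hj
    rw [hat_eq_max hn, max_eq_left, mul_zero]
    rcases lt_or_gt_of_ne hj.1 with hji | hij
    · have : (j : ℝ) + 1 ≤ i := by exact_mod_cast hji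
      linarith [le_abs_self ((n : ℝ) * x - j)]
    · have : (i : ℝ) + 1 + 1 ≤ j := by exact_mod_cast lt_of_le_of_ne hij hj.2.symm
      linarith [neg_abs_le ((n : ℝ) * x - j)]
  · exact fun h => absurd (mem_range.2 (by lia)) h
  · exact fun h => absurd (mem_range.2 (by lia)) h

theorem linErr_of_mem_meshCell (hi : i < n) (hx : x ∈ meshCell n i) :
    linErr n f x = secantErr (i / n) ((i + 1) / n) f x := by
  have hn' : (n : ℝ) ≠ 0 := by exact_mod_cast (Nat.zero_lt_of_lt hi).ne'
  rw [linErr, linInterp_of_mem_meshCell hi hx, secantErr, slope_def_field]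
  field

theorem linErr_eventuallyEq_secantErr (hi : i < n) (hx : meshCell n i ∈ nhds x) :
    linErr n f =ᶠ[nhds x] secantErr (i / n) ((i + 1) / n) f :=
  Filter.eventually_of_mem hx fun _ => linErr_of_mem_meshCell hi

-- Irrational points avoid the nodes of every mesh at once.
theorem exists_meshCell_mem_nhds (hn : 0 < n) (hx : x ∈ Set.Ioo (0 : ℝ) 1) (hxirr : Irrational x) :
    ∃ i < n, meshCell n i ∈ nhds x := by
  have hn' : (0 : ℝ) < n := by exact_mod_cast hn
  refine ⟨⌊n * x⌋₊, (Nat.floor_lt (by nlinarith [hx.1])).2 (by nlinarith [hx.2]),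
    Icc_mem_nhds ?_ ?_⟩
  · rw [div_lt_iff₀' hn']
    exact lt_of_le_of_ne (Nat.floor_le (by nlinarith [hx.1]))
      fun h => (hxirr.natCast_mul hn.ne').ne_nat _ h.symm
  · rw [lt_div_iff₀' hn']
    exact Nat.lt_floor_add_one _

theorem differentiableAt_linErr (hn : 0 < n) (hx : x ∈ Set.Ioo (0 : ℝ) 1) (hxirr : Irrational x)
    (hf : ContDiff ℝ 1 f) : DifferentiableAt ℝ (linErr n f) x := by
  obtain ⟨i, hi, hcell⟩ := exists_meshCell_mem_nhds hn hx hxirr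
  exact ((contDiff_secantErr hf).differentiable one_ne_zero).differentiableAt.congr_of_eventuallyEq
    (linErr_eventuallyEq_secantErr hi hcell)

/-- Lebesgue measure on the open unit interval. -/
abbrev unitMeasure : Measure ℝ := volume.restrict (Set.Ioo (0 : ℝ) 1)

theorem unitMeasure_eq_sum_restrict_meshCell (hn : 0 < n) :
    unitMeasure = ∑ i ∈ range n, volume.restrict (meshCell n i) := by
  have hmono : Monotone fun i : ℕ => (i : ℝ) / n := fun i j hij => by
    dsimp only
    gcongr
  have hsum := restrict_Ioc_eq_sum_restrict hmono volume n
  rw [Nat.cast_zero, zero_div, div_self (by exact_mod_cast hn.ne'),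
    restrict_Ioc_eq_restrict_Icc] at hsum
  rw [unitMeasure, restrict_Ioo_eq_restrict_Icc, hsum]
  simp only [restrict_Ioc_eq_restrict_Icc, Nat.cast_succ, meshCell]

theorem volume_meshCell (hn : 0 < n) (i : ℕ) : volume (meshCell n i) = (n : ℝ≥0∞)⁻¹ := by
  rw [meshCell, Real.volume_Icc, ← sub_div, add_sub_cancel_left, one_div,
    ENNReal.ofReal_inv_of_pos (by exact_mod_cast hn), ENNReal.ofReal_natCast]

theorem eLpNorm_unitMeasure_le_of_meshCell {φ : ℝ → ℝ} {c : ℝ≥0∞} (hp : 1 ≤ p) (hp' : p ≠ ∞)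
    (hn : 0 < n) (hφ : Measurable φ)
    (h : ∀ i < n, ∀ x, meshCell n i ∈ nhds x → ‖g x‖ₑ ≤ c * ∫⁻ t in meshCell n i, ‖φ t‖ₑ) :
    eLpNorm g p unitMeasure ≤ c * (n : ℝ≥0∞)⁻¹ * eLpNorm φ p unitMeasure := by
  rw [unitMeasure_eq_sum_restrict_meshCell hn]
  refine eLpNorm_sum_measure_le (zero_lt_one.trans_le hp).ne' hp' fun i hi => ?_
  have hae : ∀ᵐ x ∂volume.restrict (meshCell n i), meshCell n i ∈ nhds x := by
    rw [meshCell, ← restrict_Ioo_eq_restrict_Icc]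
    filter_upwards [ae_restrict_mem measurableSet_Ioo] with x hx using Icc_mem_nhds hx.1 hx.2
  have hcell := eLpNorm_le_of_ae_enorm_le_lintegral hp hφ.aestronglyMeasurable
    (hae.mono fun x => h i (mem_range.1 hi) x)
  rwa [Measure.restrict_apply_univ, volume_meshCell hn] at hcell

theorem eLpNorm_linErr_le (hp : 1 ≤ p) (hp' : p ≠ ∞) (hn : 0 < n) (hf : ContDiff ℝ 1 f) :
    eLpNorm (linErr n f) p unitMeasure ≤ (n : ℝ≥0∞)⁻¹ * eLpNorm (deriv f) p unitMeasure := by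
  simpa only [one_mul] using eLpNorm_unitMeasure_le_of_meshCell (c := 1) hp hp' hn
    (measurable_deriv f) fun i hi x hx => by
      rw [linErr_of_mem_meshCell hi (mem_of_mem_nhds hx), one_mul]
      exact enorm_secantErr_le_lintegral_deriv hf (mem_of_mem_nhds hx)

theorem eLpNorm_deriv_linErr_le (hp : 1 ≤ p) (hp' : p ≠ ∞) (hn : 0 < n) (hf : ContDiff ℝ 2 f) :
    eLpNorm (deriv (linErr n f)) p unitMeasure ≤
      (n : ℝ≥0∞)⁻¹ * eLpNorm (deriv (deriv f)) p unitMeasure := by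
  simpa only [one_mul] using eLpNorm_unitMeasure_le_of_meshCell (c := 1) hp hp' hn
    (measurable_deriv (deriv f)) fun i hi x hx => by
      rw [(linErr_eventuallyEq_secantErr hi hx).deriv_eq, one_mul]
      exact enorm_deriv_secantErr_le_lintegral_deriv_deriv hf (meshCell_lt hn i)
        (mem_of_mem_nhds hx)

theorem eLpNorm_linErr_le_deriv_deriv (hp : 1 ≤ p) (hp' : p ≠ ∞) (hn : 0 < n)
    (hf : ContDiff ℝ 2 f) :
    eLpNorm (linErr n f) p unitMeasure ≤
      (n : ℝ≥0∞)⁻¹ ^ 2 * eLpNorm (deriv (deriv f)) p unitMeasure := by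
  rw [sq]
  refine eLpNorm_unitMeasure_le_of_meshCell hp hp' hn (measurable_deriv _) fun i hi x hx => ?_
  rw [linErr_of_mem_meshCell hi (mem_of_mem_nhds hx), ← volume_meshCell hn i, meshCell,
    Real.volume_Icc]
  exact enorm_secantErr_le_lintegral_deriv_deriv hf (meshCell_lt hn i) (mem_of_mem_nhds hx)

end LinearInterpolation

section Combination

/-- The signed sum over the mesh pairs of the multiscale interpolant of level `k`, for a family `T`
indexed by the numbers of mesh cells in the two directions. The subtracted terms are indexed from
`0`, so that both sums pair up with the same second mesh `N / 2 ^ (k - i)`. -/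
def combination {A : Type*} [AddCommGroup A] (N k : ℕ) (T : ℕ → ℕ → A) : A :=
  ∑ i ∈ range (k + 1), T (N / 2 ^ i) (N / 2 ^ (k - i))
    - ∑ i ∈ range k, T (N / 2 ^ (i + 1)) (N / 2 ^ (k - i))

variable {A : Type*} [AddCommGroup A] {N k : ℕ}

theorem combination_add (N k : ℕ) (S T : ℕ → ℕ → A) :
    combination N k (fun a b => S a b + T a b) = combination N k S + combination N k T := by
  simp only [combination, sum_add_distrib]
  abel

theorem combination_sub (N k : ℕ) (S T : ℕ → ℕ → A) :
    combination N k (fun a b => S a b - T a b) = combination N k S - combination N k T := by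
  simp only [combination, sum_sub_distrib]
  abel

theorem combination_swap (N k : ℕ) (T : ℕ → ℕ → A) :
    combination N k (fun a b => T b a) = combination N k T := by
  unfold combination
  rw [← sum_range_reflect _ (k + 1), ← sum_range_reflect _ k]
  congr 1
  · exact sum_congr rfl fun i hi => by
      rw [mem_range] at hi
      simp only [show k + 1 - 1 - i = k - i by lia, show k - (k - i) = i by lia]
  · exact sum_congr rfl fun i hi => by
      rw [mem_range] at hi
      simp only [show k - (k - 1 - i) = i + 1 by lia, show k - 1 - i + 1 = k - i by lia]

theorem combination_fst (N k : ℕ) (f : ℕ → A) : combination N k (fun a _ => f a) = f N := by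
  simp [combination, sum_range_succ']

theorem combination_snd (N k : ℕ) (f : ℕ → A) : combination N k (fun _ b => f b) = f N := by
  rw [combination_swap N k fun a _ => f a, combination_fst]

theorem combination_apply {α : Type*} (N k : ℕ) (T : ℕ → ℕ → α → A) (x : α) :
    combination N k T x = combination N k fun a b => T a b x := by
  simp only [combination, Pi.sub_apply, Finset.sum_apply]

theorem msInterp_eq_combination (N k : ℕ) (u : ℝ × ℝ → ℝ) :
    msInterp N k u = combination N k fun a b => interp a b u := by
  ext z
  simp only [msInterp, combination, Pi.sub_apply, Finset.sum_apply, ← Ico_add_one_right_eq_Icc,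
    sum_Ico_eq_sum_range, add_tsub_cancel_right, add_comm 1, Nat.add_sub_add_right]

theorem inv_mul_inv_sq_le {a b c i : ℕ} (hN : 0 < N) (harea : N ≤ c * (a * b)) (hb : 2 ^ i ≤ b) :
    (a : ℝ≥0∞)⁻¹ * (b : ℝ≥0∞)⁻¹ ^ 2 ≤ c * (N : ℝ≥0∞)⁻¹ * 2⁻¹ ^ i := by
  have hc : c ≠ 0 := by rintro rfl; lia
  have hcast : (c : ℝ≥0∞) ≠ 0 := by exact_mod_cast hc
  calc (a : ℝ≥0∞)⁻¹ * (b : ℝ≥0∞)⁻¹ ^ 2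
      = c * (c * (a * b) : ℝ≥0∞)⁻¹ * (b : ℝ≥0∞)⁻¹ := by
        rw [ENNReal.mul_inv (.inl hcast) (.inl (ENNReal.natCast_ne_top c)),
          ENNReal.mul_inv (.inr (ENNReal.natCast_ne_top b)) (.inl (ENNReal.natCast_ne_top a)),
          ENNReal.mul_inv_cancel_left hcast (ENNReal.natCast_ne_top c), sq, mul_assoc]
    _ ≤ c * (N : ℝ≥0∞)⁻¹ * (2 ^ i : ℝ≥0∞)⁻¹ := by
        gcongr
        · exact_mod_cast harea
        · exact_mod_cast hb
    _ = c * (N : ℝ≥0∞)⁻¹ * 2⁻¹ ^ i := by rw [ENNReal.inv_pow]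

theorem div_two_pow_pos (hN : 0 < N) (hk : 2 ^ k ∣ N) {i : ℕ} (hi : i ≤ k) : 0 < N / 2 ^ i :=
  Nat.div_pos (Nat.le_of_dvd hN ((pow_dvd_pow 2 hi).trans hk)) (by positivity)

theorem two_pow_le_div (hN : 0 < N) (hk : 2 ^ k ∣ N) {i : ℕ} (hi : i ≤ k) :
    2 ^ i ≤ N / 2 ^ (k - i) := by
  rw [Nat.le_div_iff_mul_le (by positivity), ← pow_add, Nat.add_sub_cancel' hi]
  exact Nat.le_of_dvd hN hk

theorem le_div_mul_div (hN : 0 < N) (hk : 2 ^ k ∣ N) {i : ℕ} (hi : i ≤ k) :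
    N ≤ N / 2 ^ i * (N / 2 ^ (k - i)) :=
  calc N = N / 2 ^ i * 2 ^ i := (Nat.div_mul_cancel ((pow_dvd_pow 2 hi).trans hk)).symm
    _ ≤ N / 2 ^ i * (N / 2 ^ (k - i)) := Nat.mul_le_mul_left _ (two_pow_le_div hN hk hi)

theorem le_two_mul_div_mul_div (hN : 0 < N) (hk : 2 ^ k ∣ N) {i : ℕ} (hi : i < k) :
    N ≤ 2 * (N / 2 ^ (i + 1) * (N / 2 ^ (k - i))) :=
  calc N = 2 * (N / 2 ^ (i + 1) * 2 ^ i) := by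
        rw [mul_left_comm, ← pow_succ', Nat.div_mul_cancel ((pow_dvd_pow 2 hi).trans hk)]
    _ ≤ 2 * (N / 2 ^ (i + 1) * (N / 2 ^ (k - i))) := by
        gcongr
        exact two_pow_le_div hN hk hi.le

theorem hasDerivAt_combination {E : Type*} [NormedAddCommGroup E] [NormedSpace ℝ E]
    {T : ℕ → ℕ → ℝ → E} {T' : ℕ → ℕ → E} {x : ℝ} (hN : 0 < N) (hk : 2 ^ k ∣ N)
    (h : ∀ a b, 0 < a → 0 < b → HasDerivAt (T a b) (T' a b) x) :
    HasDerivAt (combination N k T) (combination N k T') x := by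
  refine (HasDerivAt.sum fun i hi => h _ _ ?_ ?_).sub (HasDerivAt.sum fun i hi => h _ _ ?_ ?_) <;>
    rw [mem_range] at hi <;> exact div_two_pow_pos hN hk (by lia)

theorem continuous_combination {α : Type*} [TopologicalSpace α] [TopologicalSpace A]
    [IsTopologicalAddGroup A] {T : ℕ → ℕ → α → A} (hN : 0 < N) (hk : 2 ^ k ∣ N)
    (h : ∀ a b, 0 < a → 0 < b → Continuous (T a b)) : Continuous (combination N k T) := by
  simp only [funext (combination_apply N k T)]
  refine (continuous_finsetSum _ fun i hi => h _ _ ?_ ?_).sub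
    (continuous_finsetSum _ fun i hi => h _ _ ?_ ?_) <;>
    rw [mem_range] at hi <;> exact div_two_pow_pos hN hk (by lia)

section Norm

variable {α E : Type*} [MeasurableSpace α] [NormedAddCommGroup E] {p M : ℝ≥0∞} {μ : Measure α}
  {T : ℕ → ℕ → α → E}

-- Each mesh pair has `a * b ≥ N / 2` and `b ≥ 2 ^ i`, so the weights `a⁻¹ * b⁻¹ ^ 2` decay
-- geometrically and no factor `k` is lost.
theorem eLpNorm_combination_le (hp : 1 ≤ p) (hN : 0 < N) (hk : 2 ^ k ∣ N)
    (hT : ∀ a b, 0 < a → 0 < b → AEStronglyMeasurable (T a b) μ)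
    (hM : ∀ a b, 0 < a → 0 < b →
      eLpNorm (T a b) p μ ≤ (a : ℝ≥0∞)⁻¹ * (b : ℝ≥0∞)⁻¹ ^ 2 * M) :
    eLpNorm (combination N k T) p μ ≤ 6 * (N : ℝ≥0∞)⁻¹ * M := by
  have term_le : ∀ {a b c i : ℕ}, 0 < a → 0 < b → N ≤ c * (a * b) → 2 ^ i ≤ b →
      eLpNorm (T a b) p μ ≤ c * (N : ℝ≥0∞)⁻¹ * M * 2⁻¹ ^ i := fun ha hb harea hpow =>
    (hM _ _ ha hb).trans <| by
      rw [mul_right_comm (_ * _) M]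
      exact mul_le_mul_left (inv_mul_inv_sq_le hN harea hpow) M
  have hT₁ : ∀ i < k + 1, AEStronglyMeasurable (T (N / 2 ^ i) (N / 2 ^ (k - i))) μ := fun i hi =>
    hT _ _ (div_two_pow_pos hN hk (Nat.le_of_lt_succ hi)) (div_two_pow_pos hN hk (Nat.sub_le k i))
  have hT₂ : ∀ i < k, AEStronglyMeasurable (T (N / 2 ^ (i + 1)) (N / 2 ^ (k - i))) μ :=
    fun i hi => hT _ _ (div_two_pow_pos hN hk hi) (div_two_pow_pos hN hk (Nat.sub_le k i))
  have sum₁_le : eLpNorm (∑ i ∈ range (k + 1), T (N / 2 ^ i) (N / 2 ^ (k - i))) p μ ≤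
      2 * ((1 : ℕ) * (N : ℝ≥0∞)⁻¹ * M) :=
    eLpNorm_sum_le_of_geometric hp hT₁ fun i hi => by
      rw [Nat.lt_succ_iff] at hi
      exact term_le (div_two_pow_pos hN hk hi) (div_two_pow_pos hN hk (Nat.sub_le k i))
        (by simpa only [one_mul] using le_div_mul_div hN hk hi) (two_pow_le_div hN hk hi)
  have sum₂_le : eLpNorm (∑ i ∈ range k, T (N / 2 ^ (i + 1)) (N / 2 ^ (k - i))) p μ ≤
      2 * ((2 : ℕ) * (N : ℝ≥0∞)⁻¹ * M) :=
    eLpNorm_sum_le_of_geometric hp hT₂ fun i hi =>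
      term_le (div_two_pow_pos hN hk hi) (div_two_pow_pos hN hk (Nat.sub_le k i))
        (le_two_mul_div_mul_div hN hk hi) (two_pow_le_div hN hk hi.le)
  calc eLpNorm (combination N k T) p μ
      ≤ 2 * ((1 : ℕ) * (N : ℝ≥0∞)⁻¹ * M) + 2 * ((2 : ℕ) * (N : ℝ≥0∞)⁻¹ * M) :=
        (eLpNorm_sub_le (aestronglyMeasurable_sum _ fun i hi => hT₁ i (mem_range.1 hi))
          (aestronglyMeasurable_sum _ fun i hi => hT₂ i (mem_range.1 hi)) hp).trans
          (add_le_add sum₁_le sum₂_le)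
    _ = 6 * (N : ℝ≥0∞)⁻¹ * M := by
        push_cast
        ring

theorem aestronglyMeasurable_combination (hN : 0 < N) (hk : 2 ^ k ∣ N)
    (hT : ∀ a b, 0 < a → 0 < b → AEStronglyMeasurable (T a b) μ) :
    AEStronglyMeasurable (combination N k T) μ := by
  refine (aestronglyMeasurable_sum _ fun i hi => hT _ _ ?_ ?_).sub
    (aestronglyMeasurable_sum _ fun i hi => hT _ _ ?_ ?_) <;>
    rw [mem_range] at hi <;> exact div_two_pow_pos hN hk (by lia)

theorem eLpNorm_add_sub_combination_le {f g : α → E} {A B : ℝ≥0∞} (hp : 1 ≤ p) (hN : 0 < N)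
    (hk : 2 ^ k ∣ N) (hf : AEStronglyMeasurable f μ) (hg : AEStronglyMeasurable g μ)
    (hT : ∀ a b, 0 < a → 0 < b → AEStronglyMeasurable (T a b) μ)
    (hA : eLpNorm f p μ ≤ (N : ℝ≥0∞)⁻¹ * A) (hB : eLpNorm g p μ ≤ (N : ℝ≥0∞)⁻¹ * B)
    (hM : ∀ a b, 0 < a → 0 < b →
      eLpNorm (T a b) p μ ≤ (a : ℝ≥0∞)⁻¹ * (b : ℝ≥0∞)⁻¹ ^ 2 * M) :
    eLpNorm (f + g - combination N k T) p μ ≤ (N : ℝ≥0∞)⁻¹ * (A + B + 6 * M) :=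
  calc eLpNorm (f + g - combination N k T) p μ
      ≤ eLpNorm (f + g) p μ + eLpNorm (combination N k T) p μ :=
        eLpNorm_sub_le (hf.add hg) (aestronglyMeasurable_combination hN hk hT) hp
    _ ≤ (N : ℝ≥0∞)⁻¹ * A + (N : ℝ≥0∞)⁻¹ * B + 6 * (N : ℝ≥0∞)⁻¹ * M := by
        gcongr
        · exact (eLpNorm_add_le hf hg hp).trans (add_le_add hA hB)
        · exact eLpNorm_combination_le hp hN hk hT hM
    _ = (N : ℝ≥0∞)⁻¹ * (A + B + 6 * M) := by ring

end Norm

end Combination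

section PartialDerivatives

variable {v w : ℝ × ℝ → ℝ} {s : Set (ℝ × ℝ)} {m n : WithTop ℕ∞}

theorem pderivY_eq_pderivX_comp_swap (v : ℝ × ℝ → ℝ) :
    pderivY v = pderivX (v ∘ Prod.swap) ∘ Prod.swap := rfl

theorem pderivX_comp_swap (v : ℝ × ℝ → ℝ) :
    pderivX (v ∘ Prod.swap) = pderivY v ∘ Prod.swap := rfl

theorem pderivY_comp_swap (v : ℝ × ℝ → ℝ) :
    pderivY (v ∘ Prod.swap) = pderivX v ∘ Prod.swap := rfl

theorem pderivX_eqOn (hs : IsOpen s) (h : Set.EqOn v w s) :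
    Set.EqOn (pderivX v) (pderivX w) s := fun z hz =>
  have hmem : ∀ᶠ x in nhds z.1, (x, z.2) ∈ s :=
    (Continuous.prodMk_left z.2).continuousAt.eventually_mem (hs.mem_nhds hz)
  Filter.EventuallyEq.deriv_eq (hmem.mono fun _ hx => h hx)

theorem pderivY_eqOn (hs : IsOpen s) (h : Set.EqOn v w s) :
    Set.EqOn (pderivY v) (pderivY w) s := fun z hz =>
  pderivX_eqOn (hs.preimage continuous_swap) (fun _ hz' => h hz') (x := z.swap) hz

theorem pderivX_eq_fderiv (hv : Differentiable ℝ v) :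
    pderivX v = fun z => fderiv ℝ v z (1, 0) := by
  ext z
  exact ((hv z).hasFDerivAt.comp_hasDerivAt z.1
    ((hasDerivAt_id z.1).prodMk (hasDerivAt_const z.1 z.2))).deriv

theorem pderivY_eq_fderiv (hv : Differentiable ℝ v) :
    pderivY v = fun z => fderiv ℝ v z (0, 1) := by
  ext z
  exact ((hv z).hasFDerivAt.comp_hasDerivAt z.2
    ((hasDerivAt_const z.2 z.1).prodMk (hasDerivAt_id z.2))).deriv

theorem contDiff_comp_swap (hv : ContDiff ℝ n v) : ContDiff ℝ n (v ∘ Prod.swap) :=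
  hv.comp (contDiff_snd.prodMk contDiff_fst)

theorem contDiff_pderivX (hv : ContDiff ℝ n v) (hmn : m + 1 ≤ n) : ContDiff ℝ m (pderivX v) := by
  have hn : n ≠ 0 := (zero_lt_one.trans_le (le_add_self.trans hmn)).ne'
  rw [pderivX_eq_fderiv (hv.differentiable hn)]
  exact (hv.fderiv_right hmn).clm_apply contDiff_const

theorem contDiff_pderivY (hv : ContDiff ℝ n v) (hmn : m + 1 ≤ n) : ContDiff ℝ m (pderivY v) :=
  contDiff_comp_swap (contDiff_pderivX (contDiff_comp_swap hv) hmn)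

theorem measurable_pderivX (hv : Continuous v) : Measurable (pderivX v) :=
  (measurable_deriv_with_param (f := fun y x => v (x, y))
    (hv.comp continuous_swap)).comp measurable_swap

theorem measurable_pderivY (hv : Continuous v) : Measurable (pderivY v) :=
  (measurable_pderivX (hv.comp continuous_swap)).comp measurable_swap

theorem pderivY_pderivX_comm (hv : ContDiff ℝ 2 v) :
    pderivY (pderivX v) = pderivX (pderivY v) := by
  have hdiff : Differentiable ℝ v := hv.differentiable two_ne_zero
  have hfderiv : Differentiable ℝ (fderiv ℝ v) :=
    (hv.fderiv_right (m := 1) one_add_one_eq_two.le).differentiable one_ne_zero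
  have second_deriv : ∀ z c d, fderiv ℝ (fun z => fderiv ℝ v z c) z d =
      fderiv ℝ (fderiv ℝ v) z d c := fun z c d => by
    rw [fderiv_clm_apply (hfderiv z) (differentiableAt_const c)]
    simp
  rw [pderivY_eq_fderiv ((contDiff_pderivX (m := 1) hv one_add_one_eq_two.le).differentiable
      one_ne_zero), pderivX_eq_fderiv ((contDiff_pderivY (m := 1) hv
      one_add_one_eq_two.le).differentiable one_ne_zero),
    pderivX_eq_fderiv hdiff, pderivY_eq_fderiv hdiff]
  ext z
  have hsymm : IsSymmSndFDerivAt ℝ v z := hv.contDiffAt.isSymmSndFDerivAt (by simp)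
  simpa only [second_deriv] using hsymm.eq (0, 1) (1, 0)

theorem pderivY_pderivY_pderivX_pderivX (hv : ContDiff ℝ 4 v) :
    pderivY (pderivY (pderivX (pderivX v))) = uxxyy v := by
  have hX : ContDiff ℝ 3 (pderivX v) := contDiff_pderivX hv (by norm_num)
  have hY : ContDiff ℝ 3 (pderivY v) := contDiff_pderivY hv (by norm_num)
  have hXY : ContDiff ℝ 2 (pderivX (pderivY v)) := contDiff_pderivX hY (by norm_num)
  rw [uxxyy, pderivY_pderivX_comm (hX.of_le (by norm_num)),
    pderivY_pderivX_comm (hv.of_le (by norm_num)), pderivY_pderivX_comm hXY,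
    pderivY_pderivX_comm (hY.of_le (by norm_num))]

theorem uxxyy_comp_swap (hv : ContDiff ℝ 4 v) : uxxyy (v ∘ Prod.swap) = uxxyy v ∘ Prod.swap :=
  congrArg (· ∘ Prod.swap) (pderivY_pderivY_pderivX_pderivX hv)

end PartialDerivatives

theorem inv_natCast_sq_le_inv {n : ℕ} (hn : 0 < n) : (n : ℝ≥0∞)⁻¹ ^ 2 ≤ (n : ℝ≥0∞)⁻¹ :=
  pow_le_of_le_one zero_le (ENNReal.inv_le_one.2 (by exact_mod_cast hn)) two_ne_zero

section DirectionalErrors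

variable {n : ℕ} {v : ℝ × ℝ → ℝ} {p : ℝ≥0∞}

/-- The error of piecewise linear interpolation in the first variable. -/
def errX (n : ℕ) (v : ℝ × ℝ → ℝ) (z : ℝ × ℝ) : ℝ := linErr n (fun x => v (x, z.2)) z.1

/-- The error of piecewise linear interpolation in the second variable. -/
def errY (n : ℕ) (v : ℝ × ℝ → ℝ) (z : ℝ × ℝ) : ℝ := linErr n (fun y => v (z.1, y)) z.2

theorem errY_eq_errX_comp_swap (n : ℕ) (v : ℝ × ℝ → ℝ) :
    errY n v = errX n (v ∘ Prod.swap) ∘ Prod.swap := rfl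

theorem continuous_errX (hn : 0 < n) (hv : Continuous v) : Continuous (errX n v) := by
  have := continuous_hat hn
  unfold errX linErr linInterp
  fun_prop

theorem continuous_errY (hn : 0 < n) (hv : Continuous v) : Continuous (errY n v) :=
  (continuous_errX hn (hv.comp continuous_swap)).comp continuous_swap

theorem contDiff_errY_left {m : WithTop ℕ∞} (hv : ContDiff ℝ m v) (y : ℝ) :
    ContDiff ℝ m fun x => errY n v (x, y) := by
  have hslice : ∀ t, ContDiff ℝ m fun x => v (x, t) := fun t =>
    hv.comp (contDiff_id.prodMk contDiff_const)
  exact (hslice y).sub (ContDiff.sum fun i _ => (hslice (i / n)).mul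
    (contDiff_const (c := hat n i y)))

theorem hasDerivAt_errY_left (hv : Differentiable ℝ v) (z : ℝ × ℝ) :
    HasDerivAt (fun x => errY n v (x, z.2)) (errY n (pderivX v) z) z.1 := by
  have hslice : ∀ y, HasDerivAt (fun x => v (x, y)) (pderivX v (z.1, y)) z.1 := fun y =>
    DifferentiableAt.hasDerivAt (by fun_prop)
  exact (hslice z.2).sub
    (HasDerivAt.fun_sum fun i _ => (hslice (i / n)).mul_const (hat n i z.2))

theorem pderivX_errY (hv : Differentiable ℝ v) : pderivX (errY n v) = errY n (pderivX v) :=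
  funext fun z => (hasDerivAt_errY_left hv z).deriv

theorem hasDerivAt_errX_left (hn : 0 < n) (hv : ∀ y, ContDiff ℝ 1 fun x => v (x, y))
    {z : ℝ × ℝ} (hz : z.1 ∈ Set.Ioo (0 : ℝ) 1) (hirr : Irrational z.1) :
    HasDerivAt (fun x => errX n v (x, z.2)) (pderivX (errX n v) z) z.1 :=
  (differentiableAt_linErr hn hz hirr (hv z.2)).hasDerivAt

/-- Lebesgue measure on the open unit square. -/
abbrev squareMeasure : Measure (ℝ × ℝ) := volume.restrict Omega2

theorem squareMeasure_eq_prod : squareMeasure = unitMeasure.prod unitMeasure := by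
  rw [unitMeasure, Measure.prod_restrict, ← Measure.volume_eq_prod]
  rfl

theorem eLpNorm_comp_swap_squareMeasure (v : ℝ × ℝ → ℝ) :
    eLpNorm (v ∘ Prod.swap) p squareMeasure = eLpNorm v p squareMeasure := by
  have hswap : squareMeasure.map Prod.swap = squareMeasure := by
    rw [squareMeasure_eq_prod]
    exact Measure.prod_swap
  calc eLpNorm (v ∘ Prod.swap) p squareMeasure
      = eLpNorm v p (squareMeasure.map Prod.swap) :=
        MeasurableEquiv.prodComm.measurableEmbedding.eLpNorm_map_measure.symm
    _ = eLpNorm v p squareMeasure := by rw [hswap]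

theorem eLpNorm_errX_le (hp : 1 ≤ p) (hp' : p ≠ ∞) (hn : 0 < n) (hc : Continuous v)
    (hv : ∀ y, ContDiff ℝ 1 fun x => v (x, y)) :
    eLpNorm (errX n v) p squareMeasure ≤
      (n : ℝ≥0∞)⁻¹ * eLpNorm (pderivX v) p squareMeasure := by
  rw [squareMeasure_eq_prod]
  exact eLpNorm_prod_le_of_slices (zero_lt_one.trans_le hp).ne' hp'
    (continuous_errX hn hc).aestronglyMeasurable (measurable_pderivX hc).aestronglyMeasurable
    fun y => eLpNorm_linErr_le hp hp' hn (hv y)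

theorem eLpNorm_errX_le_pderivX_pderivX (hp : 1 ≤ p) (hp' : p ≠ ∞) (hn : 0 < n)
    (hc : Continuous v) (hc' : Continuous (pderivX v)) (hv : ∀ y, ContDiff ℝ 2 fun x => v (x, y)) :
    eLpNorm (errX n v) p squareMeasure ≤
      (n : ℝ≥0∞)⁻¹ ^ 2 * eLpNorm (pderivX (pderivX v)) p squareMeasure := by
  rw [squareMeasure_eq_prod]
  exact eLpNorm_prod_le_of_slices (zero_lt_one.trans_le hp).ne' hp'
    (continuous_errX hn hc).aestronglyMeasurable (measurable_pderivX hc').aestronglyMeasurable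
    fun y => eLpNorm_linErr_le_deriv_deriv hp hp' hn (hv y)

theorem eLpNorm_pderivX_errX_le (hp : 1 ≤ p) (hp' : p ≠ ∞) (hn : 0 < n)
    (hc : Continuous v) (hc' : Continuous (pderivX v)) (hv : ∀ y, ContDiff ℝ 2 fun x => v (x, y)) :
    eLpNorm (pderivX (errX n v)) p squareMeasure ≤
      (n : ℝ≥0∞)⁻¹ * eLpNorm (pderivX (pderivX v)) p squareMeasure := by
  rw [squareMeasure_eq_prod]
  exact eLpNorm_prod_le_of_slices (zero_lt_one.trans_le hp).ne' hp'
    (measurable_pderivX (continuous_errX hn hc)).aestronglyMeasurable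
    (measurable_pderivX hc').aestronglyMeasurable fun y => by
      change eLpNorm (deriv (linErr n fun x => v (x, y))) p unitMeasure ≤
        (n : ℝ≥0∞)⁻¹ * eLpNorm (deriv (deriv fun x => v (x, y))) p unitMeasure
      exact eLpNorm_deriv_linErr_le hp hp' hn (hv y)

theorem eLpNorm_errY_le (hp : 1 ≤ p) (hp' : p ≠ ∞) (hn : 0 < n) (hv : ContDiff ℝ 1 v) :
    eLpNorm (errY n v) p squareMeasure ≤
      (n : ℝ≥0∞)⁻¹ * eLpNorm (pderivY v) p squareMeasure := by
  have hswap := contDiff_comp_swap hv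
  rw [errY_eq_errX_comp_swap, pderivY_eq_pderivX_comp_swap, eLpNorm_comp_swap_squareMeasure,
    eLpNorm_comp_swap_squareMeasure]
  exact eLpNorm_errX_le hp hp' hn hswap.continuous fun y =>
    hv.comp (contDiff_const.prodMk contDiff_id)

theorem eLpNorm_errY_le_pderivY_pderivY (hp : 1 ≤ p) (hp' : p ≠ ∞) (hn : 0 < n)
    (hv : ContDiff ℝ 2 v) :
    eLpNorm (errY n v) p squareMeasure ≤
      (n : ℝ≥0∞)⁻¹ ^ 2 * eLpNorm (pderivY (pderivY v)) p squareMeasure := by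
  have hswap := contDiff_comp_swap hv
  rw [errY_eq_errX_comp_swap, pderivY_eq_pderivX_comp_swap (pderivY v),
    eLpNorm_comp_swap_squareMeasure, eLpNorm_comp_swap_squareMeasure]
  exact eLpNorm_errX_le_pderivX_pderivX hp hp' hn hswap.continuous
    (contDiff_pderivX (m := 1) hswap one_add_one_eq_two.le).continuous fun y =>
    hv.comp (contDiff_const.prodMk contDiff_id)

end DirectionalErrors

section MixedErrors

variable {a b : ℕ} {u : ℝ × ℝ → ℝ} {p : ℝ≥0∞}

theorem continuous_pderivX_errY (hb : 0 < b) (hu : ContDiff ℝ 1 u) :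
    Continuous (pderivX (errY b u)) := by
  rw [pderivX_errY (hu.differentiable one_ne_zero)]
  exact continuous_errY hb (contDiff_pderivX (m := 0) hu (zero_add 1).le).continuous

theorem eLpNorm_pderivX_pderivX_errY_le (hp : 1 ≤ p) (hp' : p ≠ ∞) (hb : 0 < b)
    (hu : ContDiff ℝ 4 u) :
    eLpNorm (pderivX (pderivX (errY b u))) p squareMeasure ≤
      (b : ℝ≥0∞)⁻¹ ^ 2 * eLpNorm (uxxyy u) p squareMeasure := by
  have hX : ContDiff ℝ 3 (pderivX u) := contDiff_pderivX hu (by norm_num)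
  rw [pderivX_errY (hu.differentiable four_ne_zero), pderivX_errY (hX.differentiable three_ne_zero),
    ← pderivY_pderivY_pderivX_pderivX hu]
  exact eLpNorm_errY_le_pderivY_pderivY hp hp' hb (contDiff_pderivX hX (by norm_num))

theorem eLpNorm_pderivX_errX_errY_le (hp : 1 ≤ p) (hp' : p ≠ ∞) (ha : 0 < a) (hb : 0 < b)
    (hu : ContDiff ℝ 4 u) :
    eLpNorm (pderivX (errX a (errY b u))) p squareMeasure ≤
      (a : ℝ≥0∞)⁻¹ * (b : ℝ≥0∞)⁻¹ ^ 2 * eLpNorm (uxxyy u) p squareMeasure :=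
  calc eLpNorm (pderivX (errX a (errY b u))) p squareMeasure
      ≤ (a : ℝ≥0∞)⁻¹ * eLpNorm (pderivX (pderivX (errY b u))) p squareMeasure :=
        eLpNorm_pderivX_errX_le hp hp' ha (continuous_errY hb hu.continuous)
          (continuous_pderivX_errY hb (hu.of_le (by norm_num)))
          (contDiff_errY_left (hu.of_le (by norm_num)))
    _ ≤ (a : ℝ≥0∞)⁻¹ * ((b : ℝ≥0∞)⁻¹ ^ 2 * eLpNorm (uxxyy u) p squareMeasure) := by
        gcongr
        exact eLpNorm_pderivX_pderivX_errY_le hp hp' hb hu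
    _ = (a : ℝ≥0∞)⁻¹ * (b : ℝ≥0∞)⁻¹ ^ 2 * eLpNorm (uxxyy u) p squareMeasure :=
        (mul_assoc ..).symm

theorem eLpNorm_errX_errY_le (hp : 1 ≤ p) (hp' : p ≠ ∞) (ha : 0 < a) (hb : 0 < b)
    (hu : ContDiff ℝ 4 u) :
    eLpNorm (errX a (errY b u)) p squareMeasure ≤
      (a : ℝ≥0∞)⁻¹ * (b : ℝ≥0∞)⁻¹ ^ 2 * eLpNorm (uxxyy u) p squareMeasure :=
  calc eLpNorm (errX a (errY b u)) p squareMeasure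
      ≤ (a : ℝ≥0∞)⁻¹ ^ 2 * eLpNorm (pderivX (pderivX (errY b u))) p squareMeasure :=
        eLpNorm_errX_le_pderivX_pderivX hp hp' ha (continuous_errY hb hu.continuous)
          (continuous_pderivX_errY hb (hu.of_le (by norm_num)))
          (contDiff_errY_left (hu.of_le (by norm_num)))
    _ ≤ (a : ℝ≥0∞)⁻¹ * ((b : ℝ≥0∞)⁻¹ ^ 2 * eLpNorm (uxxyy u) p squareMeasure) := by
        gcongr
        · exact inv_natCast_sq_le_inv ha
        · exact eLpNorm_pderivX_pderivX_errY_le hp hp' hb hu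
    _ = (a : ℝ≥0∞)⁻¹ * (b : ℝ≥0∞)⁻¹ ^ 2 * eLpNorm (uxxyy u) p squareMeasure :=
        (mul_assoc ..).symm

end MixedErrors

section ErrorDecomposition

variable {N k : ℕ} {u : ℝ × ℝ → ℝ} {p : ℝ≥0∞}

theorem interp_eq_sub_errX_sub_errY_add (a b : ℕ) (u : ℝ × ℝ → ℝ) :
    interp a b u = u - errX a u - errY b u + errX a (errY b u) := by
  ext z
  simp only [Pi.add_apply, Pi.sub_apply, interp, errX, errY, linErr, linInterp, sub_mul, sum_mul,
    sum_sub_distrib, mul_right_comm _ (hat a _ _)]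
  ring

theorem interp_comp_swap (a b : ℕ) (u : ℝ × ℝ → ℝ) :
    interp a b (u ∘ Prod.swap) = interp b a u ∘ Prod.swap := by
  ext z
  simp only [interp, Function.comp_apply, Prod.swap_prod_mk, Prod.fst_swap, Prod.snd_swap,
    mul_right_comm _ (hat a _ _)]
  exact sum_comm

/-- The error `u - I^{(k)}_{N,N} u` of the multiscale interpolant of level `k`. -/
def msErr (N k : ℕ) (u : ℝ × ℝ → ℝ) : ℝ × ℝ → ℝ := fun z => u z - msInterp N k u z

theorem msErr_eq_errX_add_errY_sub (N k : ℕ) (u : ℝ × ℝ → ℝ) :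
    msErr N k u = errX N u + errY N u - combination N k fun a b => errX a (errY b u) := by
  have hms : msInterp N k u =
      u - errX N u - errY N u + combination N k fun a b => errX a (errY b u) := by
    simp only [msInterp_eq_combination, interp_eq_sub_errX_sub_errY_add, combination_add,
      combination_sub, combination_fst N k fun _ => u, combination_fst N k fun a => errX a u,
      combination_snd N k fun b => errY b u]
  rw [show msErr N k u = u - msInterp N k u from rfl, hms]
  abel

theorem msErr_comp_swap (N k : ℕ) (u : ℝ × ℝ → ℝ) :
    msErr N k (u ∘ Prod.swap) = msErr N k u ∘ Prod.swap := by
  have hms : msInterp N k (u ∘ Prod.swap) = msInterp N k u ∘ Prod.swap := by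
    ext z
    rw [msInterp_eq_combination, ← combination_swap, Function.comp_apply, msInterp_eq_combination,
      combination_apply, combination_apply]
    simp only [interp_comp_swap, Function.comp_apply]
  ext z
  simp only [msErr, hms, Function.comp_apply]

theorem isOpen_Omega2 : IsOpen Omega2 := isOpen_Ioo.prod isOpen_Ioo

theorem ae_mem_Omega2_and_irrational_fst :
    ∀ᵐ z ∂squareMeasure, z ∈ Omega2 ∧ Irrational z.1 := by
  have hirr : ∀ᵐ x : ℝ, Irrational x := (Set.countable_range ((↑) : ℚ → ℝ)).ae_notMem volume
  exact (ae_restrict_mem isOpen_Omega2.measurableSet).and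
    (ae_restrict_of_ae (Measure.quasiMeasurePreserving_fst.ae hirr))

theorem pderivX_msErr_ae_eq (hN : 0 < N) (hk : 2 ^ k ∣ N) (hu : ContDiff ℝ 1 u) :
    pderivX (msErr N k u) =ᵐ[squareMeasure]
      pderivX (errX N u) + errY N (pderivX u) -
        combination N k fun a b => pderivX (errX a (errY b u)) := by
  filter_upwards [ae_mem_Omega2_and_irrational_fst] with z ⟨hz, hirr⟩
  have hX : HasDerivAt (fun x => errX N u (x, z.2)) (pderivX (errX N u) z) z.1 :=
    hasDerivAt_errX_left hN (fun y => hu.comp (contDiff_id.prodMk contDiff_const)) hz.1 hirr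
  have hY : HasDerivAt (fun x => errY N u (x, z.2)) (errY N (pderivX u) z) z.1 :=
    hasDerivAt_errY_left (hu.differentiable one_ne_zero) z
  have hXY := hasDerivAt_combination hN hk fun a b ha _ =>
    hasDerivAt_errX_left ha (contDiff_errY_left (n := b) hu) hz.1 hirr
  have hsum := (hX.add hY).sub hXY
  rw [Pi.sub_apply, Pi.add_apply, combination_apply, ← hsum.deriv, msErr_eq_errX_add_errY_sub]
  refine congrArg (deriv · z.1) (funext fun x => ?_)
  simp only [Pi.sub_apply, Pi.add_apply, combination_apply]

theorem eLpNorm_pderivX_msErr_le (hp : 1 ≤ p) (hp' : p ≠ ∞) (hN : 0 < N) (hk : 2 ^ k ∣ N)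
    (hu : ContDiff ℝ 4 u) :
    eLpNorm (pderivX (msErr N k u)) p squareMeasure ≤
      (N : ℝ≥0∞)⁻¹ * (eLpNorm (pderivX (pderivX u)) p squareMeasure +
        eLpNorm (pderivY (pderivX u)) p squareMeasure +
          6 * eLpNorm (uxxyy u) p squareMeasure) := by
  have hX : ContDiff ℝ 3 (pderivX u) := contDiff_pderivX hu (by norm_num)
  rw [eLpNorm_congr_ae (pderivX_msErr_ae_eq hN hk (hu.of_le (by norm_num)))]
  exact eLpNorm_add_sub_combination_le hp hN hk
    (measurable_pderivX (continuous_errX hN hu.continuous)).aestronglyMeasurable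
    (continuous_errY hN hX.continuous).aestronglyMeasurable
    (fun a b ha hb => (measurable_pderivX
      (continuous_errX ha (continuous_errY hb hu.continuous))).aestronglyMeasurable)
    (eLpNorm_pderivX_errX_le hp hp' hN hu.continuous hX.continuous
      fun y => (hu.of_le (by norm_num)).comp (contDiff_id.prodMk contDiff_const))
    (eLpNorm_errY_le hp hp' hN (hX.of_le (by norm_num)))
    fun a b ha hb => eLpNorm_pderivX_errX_errY_le hp hp' ha hb hu

theorem eLpNorm_pderivY_msErr_le (hp : 1 ≤ p) (hp' : p ≠ ∞) (hN : 0 < N) (hk : 2 ^ k ∣ N)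
    (hu : ContDiff ℝ 4 u) :
    eLpNorm (pderivY (msErr N k u)) p squareMeasure ≤
      (N : ℝ≥0∞)⁻¹ * (eLpNorm (pderivY (pderivY u)) p squareMeasure +
        eLpNorm (pderivX (pderivY u)) p squareMeasure +
          6 * eLpNorm (uxxyy u) p squareMeasure) := by
  have hswap := eLpNorm_pderivX_msErr_le hp hp' hN hk (contDiff_comp_swap hu)
  simpa only [msErr_comp_swap, uxxyy_comp_swap hu, pderivX_comp_swap, pderivY_comp_swap,
    eLpNorm_comp_swap_squareMeasure] using hswap

theorem eLpNorm_msErr_le (hp : 1 ≤ p) (hp' : p ≠ ∞) (hN : 0 < N) (hk : 2 ^ k ∣ N)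
    (hu : ContDiff ℝ 4 u) :
    eLpNorm (msErr N k u) p squareMeasure ≤
      (N : ℝ≥0∞)⁻¹ * (eLpNorm (pderivX (pderivX u)) p squareMeasure +
        eLpNorm (pderivY (pderivY u)) p squareMeasure +
          6 * eLpNorm (uxxyy u) p squareMeasure) := by
  have hu2 : ContDiff ℝ 2 u := hu.of_le (by norm_num)
  have hX : ContDiff ℝ 1 (pderivX u) := contDiff_pderivX hu2 one_add_one_eq_two.le
  rw [msErr_eq_errX_add_errY_sub]
  exact eLpNorm_add_sub_combination_le hp hN hk
    (continuous_errX hN hu.continuous).aestronglyMeasurable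
    (continuous_errY hN hu.continuous).aestronglyMeasurable
    (fun a b ha hb => (continuous_errX ha (continuous_errY hb hu.continuous)).aestronglyMeasurable)
    ((eLpNorm_errX_le_pderivX_pderivX hp hp' hN hu.continuous hX.continuous
      fun y => hu2.comp (contDiff_id.prodMk contDiff_const)).trans
        (mul_le_mul_left (inv_natCast_sq_le_inv hN) _))
    ((eLpNorm_errY_le_pderivY_pderivY hp hp' hN hu2).trans
      (mul_le_mul_left (inv_natCast_sq_le_inv hN) _))
    fun a b ha hb => eLpNorm_errX_errY_le hp hp' ha hb hu

end ErrorDecomposition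

section EnergyNorm

variable {v : ℝ × ℝ → ℝ}

theorem Omega2_subset_unitSquare : Omega2 ⊆ unitSquare :=
  Set.prod_mono Set.Ioo_subset_Icc_self Set.Ioo_subset_Icc_self

theorem memLp_squareMeasure_of_continuous {p : ℝ≥0∞} (hv : Continuous v) :
    MemLp v p squareMeasure := by
  have hfinite : IsFiniteMeasure squareMeasure := squareMeasure_eq_prod ▸ inferInstance
  have hcompact : IsCompact unitSquare := isCompact_Icc.prod isCompact_Icc
  obtain ⟨C, hC⟩ := hcompact.exists_bound_of_continuousOn hv.continuousOn
  exact MemLp.of_bound hv.aestronglyMeasurable C <|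
    (ae_restrict_mem isOpen_Omega2.measurableSet).mono fun z hz =>
      hC z (Omega2_subset_unitSquare hz)

theorem ofReal_L2norm (hv : MemLp v 2 squareMeasure) :
    ENNReal.ofReal (L2norm v) = eLpNorm v 2 squareMeasure := by
  rw [hv.eLpNorm_eq_integral_rpow_norm two_ne_zero ENNReal.ofNat_ne_top, L2norm, Real.sqrt_eq_rpow]
  simp

theorem ofReal_L2norm_le (hv : AEStronglyMeasurable v squareMeasure) :
    ENNReal.ofReal (L2norm v) ≤ eLpNorm v 2 squareMeasure := by
  rcases eq_or_ne (eLpNorm v 2 squareMeasure) ∞ with htop | hfin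
  · exact htop ▸ le_top
  · exact (ofReal_L2norm ⟨hv, hfin.lt_top⟩).le

theorem ofReal_energyNorm_le (hv : Continuous v) :
    ENNReal.ofReal (energyNorm v) ≤ eLpNorm (pderivX v) 2 squareMeasure +
      eLpNorm (pderivY v) 2 squareMeasure + eLpNorm v 2 squareMeasure := by
  have hX : Measurable (pderivX v) := measurable_pderivX hv
  have hY : Measurable (pderivY v) := measurable_pderivY hv
  have henergy : energyNorm v = L2norm fun z => √(pderivX v z ^ 2 + pderivY v z ^ 2 + v z ^ 2) := by
    have hsq : ∀ z, 0 ≤ pderivX v z ^ 2 + pderivY v z ^ 2 + v z ^ 2 := fun z => by positivity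
    simp only [energyNorm, L2norm, Real.sq_sqrt (hsq _)]
  have hle : ∀ z, ‖√(pderivX v z ^ 2 + pderivY v z ^ 2 + v z ^ 2)‖ ≤
      ‖‖pderivX v z‖ + ‖pderivY v z‖ + ‖v z‖‖ := fun z => by
    rw [Real.norm_of_nonneg (Real.sqrt_nonneg _), Real.norm_of_nonneg (by positivity)]
    refine Real.sqrt_le_iff.2 ⟨by positivity, ?_⟩
    simp only [Real.norm_eq_abs, ← sq_abs (pderivX v z), ← sq_abs (pderivY v z), ← sq_abs (v z)]
    exact (add_le_add_left (pow_add_pow_le (abs_nonneg _) (abs_nonneg _) two_ne_zero) _).trans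
      (pow_add_pow_le (by positivity) (abs_nonneg _) two_ne_zero)
  calc ENNReal.ofReal (energyNorm v)
      ≤ eLpNorm (fun z => √(pderivX v z ^ 2 + pderivY v z ^ 2 + v z ^ 2)) 2 squareMeasure :=
        henergy ▸ ofReal_L2norm_le (Measurable.aestronglyMeasurable (by fun_prop))
    _ ≤ eLpNorm (fun z => ‖pderivX v z‖ + ‖pderivY v z‖ + ‖v z‖) 2 squareMeasure :=
        eLpNorm_mono hle
    _ ≤ eLpNorm (pderivX v) 2 squareMeasure + eLpNorm (pderivY v) 2 squareMeasure +
          eLpNorm v 2 squareMeasure := by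
        simp only [← eLpNorm_norm (pderivX v), ← eLpNorm_norm (pderivY v), ← eLpNorm_norm v]
        exact (eLpNorm_add_le (by fun_prop) (by fun_prop) one_le_two).trans
          (add_le_add_left (eLpNorm_add_le (by fun_prop) (by fun_prop) one_le_two) _)

end EnergyNorm

section FinalBound

variable {N k : ℕ} {u : ℝ × ℝ → ℝ}

theorem continuous_msErr (hN : 0 < N) (hk : 2 ^ k ∣ N) (hu : Continuous u) :
    Continuous (msErr N k u) := by
  rw [msErr_eq_errX_add_errY_sub]
  exact ((continuous_errX hN hu).add (continuous_errY hN hu)).sub <|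
    continuous_combination hN hk fun a b ha hb => continuous_errX ha (continuous_errY hb hu)

theorem L2norm_nonneg (v : ℝ × ℝ → ℝ) : 0 ≤ L2norm v := Real.sqrt_nonneg _

theorem semi2_nonneg (u : ℝ × ℝ → ℝ) : 0 ≤ semi2 u :=
  add_nonneg (add_nonneg (L2norm_nonneg _) (L2norm_nonneg _)) (L2norm_nonneg _)

theorem ofReal_semi2 (hu : ContDiff ℝ 2 u) :
    ENNReal.ofReal (semi2 u) = eLpNorm (pderivX (pderivX u)) 2 squareMeasure +
      eLpNorm (pderivX (pderivY u)) 2 squareMeasure +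
        eLpNorm (pderivY (pderivY u)) 2 squareMeasure := by
  have hX : ContDiff ℝ 1 (pderivX u) := contDiff_pderivX hu one_add_one_eq_two.le
  have hY : ContDiff ℝ 1 (pderivY u) := contDiff_pderivY hu one_add_one_eq_two.le
  have hXX : ContDiff ℝ 0 (pderivX (pderivX u)) := contDiff_pderivX hX (zero_add 1).le
  have hXY : ContDiff ℝ 0 (pderivX (pderivY u)) := contDiff_pderivX hY (zero_add 1).le
  have hYY : ContDiff ℝ 0 (pderivY (pderivY u)) := contDiff_pderivY hY (zero_add 1).le
  rw [semi2, ENNReal.ofReal_add (add_nonneg (L2norm_nonneg _) (L2norm_nonneg _)) (L2norm_nonneg _),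
    ENNReal.ofReal_add (L2norm_nonneg _) (L2norm_nonneg _),
    ofReal_L2norm (memLp_squareMeasure_of_continuous hXX.continuous),
    ofReal_L2norm (memLp_squareMeasure_of_continuous hXY.continuous),
    ofReal_L2norm (memLp_squareMeasure_of_continuous hYY.continuous)]

theorem continuous_uxxyy (hu : ContDiff ℝ 4 u) : Continuous (uxxyy u) := by
  have hY : ContDiff ℝ 3 (pderivY u) := contDiff_pderivY hu (by norm_num)
  have hYY : ContDiff ℝ 2 (pderivY (pderivY u)) := contDiff_pderivY hY (by norm_num)
  have hXYY : ContDiff ℝ 1 (pderivX (pderivY (pderivY u))) := contDiff_pderivX hYY (by norm_num)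
  exact (contDiff_pderivX (m := 0) hXYY (zero_add 1).le).continuous

theorem energyNorm_msErr_le (hN : 0 < N) (hk : 2 ^ k ∣ N) (hu : ContDiff ℝ 4 u) :
    energyNorm (msErr N k u) ≤ 18 * (N : ℝ)⁻¹ * (semi2 u + L2norm (uxxyy u)) := by
  have hu2 : ContDiff ℝ 2 u := hu.of_le (by norm_num)
  have hX := eLpNorm_pderivX_msErr_le one_le_two ENNReal.ofNat_ne_top hN hk hu
  have hY := eLpNorm_pderivY_msErr_le one_le_two ENNReal.ofNat_ne_top hN hk hu
  have hV := eLpNorm_msErr_le one_le_two ENNReal.ofNat_ne_top hN hk hu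
  rw [pderivY_pderivX_comm hu2] at hX
  have hs := semi2_nonneg u
  have hM := L2norm_nonneg (uxxyy u)
  rw [← ENNReal.ofReal_le_ofReal_iff (by positivity), ENNReal.ofReal_mul (by positivity),
    ENNReal.ofReal_add hs hM, ENNReal.ofReal_mul (by positivity),
    ENNReal.ofReal_inv_of_pos (by exact_mod_cast hN), ENNReal.ofReal_natCast, ENNReal.ofReal_ofNat,
    ofReal_semi2 hu2, ofReal_L2norm (memLp_squareMeasure_of_continuous (continuous_uxxyy hu))]
  refine (ofReal_energyNorm_le (continuous_msErr hN hk hu.continuous)).trans <|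
    (add_le_add (add_le_add hX hY) hV).trans ?_
  set XX := eLpNorm (pderivX (pderivX u)) 2 squareMeasure
  set XY := eLpNorm (pderivX (pderivY u)) 2 squareMeasure
  set YY := eLpNorm (pderivY (pderivY u)) 2 squareMeasure
  set M := eLpNorm (uxxyy u) 2 squareMeasure
  calc (N : ℝ≥0∞)⁻¹ * (XX + XY + 6 * M) + (N : ℝ≥0∞)⁻¹ * (YY + XY + 6 * M) +
        (N : ℝ≥0∞)⁻¹ * (XX + YY + 6 * M)
      = 2 * (N : ℝ≥0∞)⁻¹ * (XX + XY + YY) + 18 * (N : ℝ≥0∞)⁻¹ * M := by ring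
    _ ≤ 18 * (N : ℝ≥0∞)⁻¹ * (XX + XY + YY) + 18 * (N : ℝ≥0∞)⁻¹ * M := by gcongr; norm_num
    _ = 18 * (N : ℝ≥0∞)⁻¹ * (XX + XY + YY + M) := (mul_add ..).symm

end FinalBound

section Localization

variable {v w : ℝ × ℝ → ℝ}

theorem exists_contDiff_eqOn_of_isCompact {E : Type*} [NormedAddCommGroup E] [NormedSpace ℝ E]
    [FiniteDimensional ℝ E] {F : Type*} [NormedAddCommGroup F] [NormedSpace ℝ F] {n : ℕ∞}
    {f : E → F} {K U : Set E} (hK : IsCompact K) (hU : IsOpen U) (hKU : K ⊆ U)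
    (hf : ContDiffOn ℝ n f U) : ∃ g : E → F, ContDiff ℝ n g ∧ Set.EqOn f g K := by
  obtain ⟨L, hL, hKL, hLU⟩ := exists_compact_between hK hU hKU
  obtain ⟨χ, hχ_one, hχ_zero, -⟩ := exists_contMDiffMap_one_nhds_of_subset_interior
    (modelWithCornersSelf ℝ E) (n := n) hK.isClosed hKL
  refine ⟨fun x => χ x • f x, contDiff_iff_contDiffAt.2 fun x => ?_, fun x hx => ?_⟩
  · by_cases hx : x ∈ L
    · exact χ.contMDiff.contDiff.contDiffAt.smul (hf.contDiffAt (hU.mem_nhds (hLU hx)))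
    · have hzero : (fun x => χ x • f x) =ᶠ[nhds x] fun _ => 0 := by
        filter_upwards [hL.isClosed.isOpen_compl.mem_nhds hx] with y hy
        rw [hχ_zero y hy, zero_smul]
      exact contDiffAt_const.congr_of_eventuallyEq hzero
  · exact (by rw [hχ_one.self_of_nhdsSet x hx, one_smul] : χ x • f x = f x).symm

theorem L2norm_congr (h : Set.EqOn v w Omega2) : L2norm v = L2norm w :=
  congrArg Real.sqrt <| setIntegral_congr_fun isOpen_Omega2.measurableSet fun _ hz =>
    congrArg (· ^ 2) (h hz)

theorem semi2_congr (h : Set.EqOn v w Omega2) : semi2 v = semi2 w := by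
  have hX : Set.EqOn (pderivX v) (pderivX w) Omega2 := pderivX_eqOn isOpen_Omega2 h
  have hY : Set.EqOn (pderivY v) (pderivY w) Omega2 := pderivY_eqOn isOpen_Omega2 h
  rw [semi2, semi2, L2norm_congr (pderivX_eqOn isOpen_Omega2 hX),
    L2norm_congr (pderivX_eqOn isOpen_Omega2 hY), L2norm_congr (pderivY_eqOn isOpen_Omega2 hY)]

theorem uxxyy_eqOn (h : Set.EqOn v w Omega2) : Set.EqOn (uxxyy v) (uxxyy w) Omega2 :=
  pderivX_eqOn isOpen_Omega2 <| pderivX_eqOn isOpen_Omega2 <|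
    pderivY_eqOn isOpen_Omega2 <| pderivY_eqOn isOpen_Omega2 h

theorem energyNorm_congr (h : Set.EqOn v w Omega2) : energyNorm v = energyNorm w :=
  congrArg Real.sqrt <| setIntegral_congr_fun isOpen_Omega2.measurableSet fun _ hz => by
    simp only [h hz, pderivX_eqOn isOpen_Omega2 h hz, pderivY_eqOn isOpen_Omega2 h hz]

theorem interp_congr (a b : ℕ) (h : Set.EqOn v w unitSquare) : interp a b v = interp a b w := by
  have node_mem : ∀ n : ℕ, ∀ i ∈ range (n + 1), (i : ℝ) / n ∈ Set.Icc (0 : ℝ) 1 := fun n i hi =>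
    ⟨by positivity, div_le_one_of_le₀ (by exact_mod_cast mem_range_succ_iff.1 hi) (by positivity)⟩
  funext z
  exact sum_congr rfl fun i hi => sum_congr rfl fun j hj => by
    rw [h ⟨node_mem a i hi, node_mem b j hj⟩]

theorem msErr_eqOn (N k : ℕ) (h : Set.EqOn v w unitSquare) :
    Set.EqOn (msErr N k v) (msErr N k w) unitSquare := fun z hz => by
  simp only [msErr, msInterp, h hz, interp_congr _ _ h]

end Localization

theorem multiscale_interpolant_maximal_level_bound_general :
    ∃ C : ℝ, 0 < C ∧ ∀ N k : ℕ, 0 < N → 2 ^ k ∣ N →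
      ∀ u : ℝ × ℝ → ℝ, C4Near u →
        energyNorm (fun p => u p - msInterp N k u p) ≤
          C * (N : ℝ)⁻¹ * (semi2 u + L2norm (uxxyy u)) := by
  refine ⟨18, by norm_num, fun N k hN hk u ⟨U, hU, hsub, hdiff⟩ => ?_⟩
  obtain ⟨w, hw, heq⟩ :=
    exists_contDiff_eqOn_of_isCompact (n := 4) (isCompact_Icc.prod isCompact_Icc) hU hsub hdiff
  have heqΩ : Set.EqOn u w Omega2 := heq.mono Omega2_subset_unitSquare
  calc energyNorm (msErr N k u)
      = energyNorm (msErr N k w) :=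
        energyNorm_congr ((msErr_eqOn N k heq).mono Omega2_subset_unitSquare)
    _ ≤ 18 * (N : ℝ)⁻¹ * (semi2 w + L2norm (uxxyy w)) := energyNorm_msErr_le hN hk hw
    _ = 18 * (N : ℝ)⁻¹ * (semi2 u + L2norm (uxxyy u)) := by
        rw [semi2_congr heqΩ, L2norm_congr (uxxyy_eqOn heqΩ)]

/-- Taking the maximal level `k̃ = log₂(N) − 1 = m − 1`, the multiscale interpolant satisfies
`|||u − I^{(k̃)}_{N,N}u||| ≤ C N⁻¹ (|u|₂ + ‖∂⁴u/∂x²∂y²‖_{0,Ω})` for `N = 2^m`. -/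
theorem multiscale_interpolant_maximal_level_bound :
    ∃ C : ℝ, 0 < C ∧ ∀ m : ℕ, 1 ≤ m →
      ∀ u : ℝ × ℝ → ℝ, C4Near u → VanishOnBoundary u →
        energyNorm (fun p => u p - msInterp (2 ^ m) (m - 1) u p) ≤
          C * ((2 : ℝ) ^ m)⁻¹ * (semi2 u + L2norm (uxxyy u)) := by
  obtain ⟨C, hC, hbound⟩ := multiscale_interpolant_maximal_level_bound_general
  exact ⟨C, hC, fun m _ u hu _ => by
    simpa using hbound (2 ^ m) (m - 1) (by positivity) (pow_dvd_pow 2 (Nat.sub_le m 1)) u hu⟩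
end
end

section
/- Let k be an odd positive integer, m > k, and N = 2^m. Then Σ_{l=0}^{(k−1)/2} (N/2^{l+1})·(N/2^{k−l} − 1) + (N/2^{(k+1)/2} − 1)·(N/2^{(k−1)/2} − 1) + Σ_{l=(k+3)/2}^{k} (N/2^l − 1)·(N/2^{k−l+1}) = (k+2)·N²/2^{k+1} − 2N + 1. That is, the chosen non-redundant basis of the multiscale sparse grid space V^{(k)}_{N,N} for odd k has exactly 2^{−k}(k/2 + 1)N² − 2N + 1 elements. -/
open Finset

/-!
A tensor-product block at levels `(l + 1, k - l)` has `N / 2 ^ (l + 1) * (N / 2 ^ (k - l) - 1)`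
elements. Levels add under multiplication, so this is `N ^ 2 / 2 ^ (k + 1)`, whatever `l` is, minus
`N / 2 ^ (l + 1)`, and the subtracted terms telescope. The blocks beyond the diagonal are the
transposes `l ↦ k - l` of blocks before it. With `k = 2 * p + 1` and `q = N / 2 ^ (p + 1)`, the
remainders `q` and `2 * q` of the two telescoping sums cancel the linear part of the middle block
`(q - 1) * (2 * q - 1)`.
-/

section DivPow

variable {d N : ℕ}

lemma div_pow_mul_div_pow {a b : ℕ} (ha : d ^ a ∣ N) (hb : d ^ b ∣ N) :
    N / d ^ a * (N / d ^ b) = N ^ 2 / d ^ (a + b) := by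
  rw [Nat.div_mul_div_comm ha hb, ← sq, ← pow_add]

lemma mul_div_pow_succ {n : ℕ} (h : d ^ (n + 1) ∣ N) : d * (N / d ^ (n + 1)) = N / d ^ n := by
  rw [pow_succ, ← Nat.div_div_eq_div_mul]
  exact Nat.mul_div_cancel' (Nat.dvd_div_of_mul_dvd (pow_succ d n ▸ h))

lemma sub_one_mul_sum_div_pow_succ {n : ℕ} (h : d ^ n ∣ N) :
    ((d : ℤ) - 1) * ∑ j ∈ range n, ((N / d ^ (j + 1) : ℕ) : ℤ) = N - ((N / d ^ n : ℕ) : ℤ) := by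
  have step : ∀ j ∈ range n, ((d : ℤ) - 1) * ((N / d ^ (j + 1) : ℕ) : ℤ) =
      ((N / d ^ j : ℕ) : ℤ) - ((N / d ^ (j + 1) : ℕ) : ℤ) := by
    intro j hj
    have hdvd : d ^ (j + 1) ∣ N := (pow_dvd_pow d (mem_range.1 hj)).trans h
    rw [sub_mul, one_mul, ← mul_div_pow_succ hdvd, Nat.cast_mul]
  rw [mul_sum, sum_congr rfl step, sum_range_sub', pow_zero, Nat.div_one]

end DivPow

lemma sum_Icc_eq_sum_range_reflect {M : Type*} [AddCommMonoid M] (f : ℕ → M) {k n : ℕ}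
    (hn : n ≤ k + 1) : ∑ l ∈ Icc (k + 1 - n) k, f l = ∑ l ∈ range n, f (k - l) := by
  rw [range_eq_Ico, sum_Ico_reflect f 0 hn, Nat.sub_zero, Ico_add_one_right_eq_Icc]

section Blocks

variable {k N n : ℕ}

lemma sum_block_card (hN : 2 ^ k ∣ N) (hn : n ≤ k) :
    ∑ l ∈ range n, ((N / 2 ^ (l + 1) : ℕ) : ℤ) * (((N / 2 ^ (k - l) : ℕ) : ℤ) - 1) =
      n * ((N ^ 2 / 2 ^ (k + 1) : ℕ) : ℤ) - (N - ((N / 2 ^ n : ℕ) : ℤ)) := by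
  have hdvd {a : ℕ} (ha : a ≤ k) : 2 ^ a ∣ N := (pow_dvd_pow 2 ha).trans hN
  have block_card : ∀ l ∈ range n,
      ((N / 2 ^ (l + 1) : ℕ) : ℤ) * (((N / 2 ^ (k - l) : ℕ) : ℤ) - 1) =
        ((N ^ 2 / 2 ^ (k + 1) : ℕ) : ℤ) - ((N / 2 ^ (l + 1) : ℕ) : ℤ) := by
    intro l hl
    have hlk : l + 1 ≤ k := (mem_range.1 hl).trans_le hn
    rw [mul_sub_one, ← Nat.cast_mul, div_pow_mul_div_pow (hdvd hlk) (hdvd (Nat.sub_le k l)),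
      show l + 1 + (k - l) = k + 1 by lia]
  have telescope : ∑ l ∈ range n, ((N / 2 ^ (l + 1) : ℕ) : ℤ) = N - ((N / 2 ^ n : ℕ) : ℤ) := by
    simpa using sub_one_mul_sum_div_pow_succ (hdvd hn)
  rw [sum_congr rfl block_card, sum_sub_distrib, telescope, sum_const, card_range, nsmul_eq_mul]

lemma sum_transposed_block_card (hN : 2 ^ k ∣ N) (hn : n ≤ k) :
    ∑ l ∈ Icc (k + 1 - n) k, (((N / 2 ^ l : ℕ) : ℤ) - 1) * ((N / 2 ^ (k - l + 1) : ℕ) : ℤ) =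
      n * ((N ^ 2 / 2 ^ (k + 1) : ℕ) : ℤ) - (N - ((N / 2 ^ n : ℕ) : ℤ)) := by
  rw [sum_Icc_eq_sum_range_reflect _ (by lia), ← sum_block_card hN hn]
  refine sum_congr rfl fun l hl => ?_
  rw [Nat.sub_sub_self ((mem_range.1 hl).le.trans hn), mul_comm]

end Blocks

theorem multiscale_basis_count_odd_general (k N : ℕ) (hodd : k % 2 = 1) (hN : 2 ^ k ∣ N) :
    (∑ l ∈ range ((k - 1) / 2 + 1),
        ((N / 2 ^ (l + 1) : ℕ) : ℤ) * (((N / 2 ^ (k - l) : ℕ) : ℤ) - 1)) +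
      (((N / 2 ^ ((k + 1) / 2) : ℕ) : ℤ) - 1) * (((N / 2 ^ ((k - 1) / 2) : ℕ) : ℤ) - 1) +
      (∑ l ∈ Finset.Icc ((k + 3) / 2) k,
        (((N / 2 ^ l : ℕ) : ℤ) - 1) * ((N / 2 ^ (k - l + 1) : ℕ) : ℤ)) =
      ((k : ℤ) + 2) * ((N ^ 2 / 2 ^ (k + 1) : ℕ) : ℤ) - 2 * (N : ℤ) + 1 := by
  obtain ⟨p, rfl⟩ : Odd k := Nat.odd_iff.2 hodd
  have hdvd : 2 ^ (p + 1) ∣ N := (pow_dvd_pow 2 (by lia)).trans hN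
  have coarser : N / 2 ^ p = 2 * (N / 2 ^ (p + 1)) := (mul_div_pow_succ hdvd).symm
  have square : N ^ 2 / 2 ^ (2 * p + 1 + 1) = N / 2 ^ (p + 1) * (N / 2 ^ (p + 1)) := by
    rw [div_pow_mul_div_pow hdvd hdvd, show p + 1 + (p + 1) = 2 * p + 1 + 1 by ring]
  rw [show (2 * p + 1 - 1) / 2 = p by lia, show (2 * p + 1 + 1) / 2 = p + 1 by lia,
    show (2 * p + 1 + 3) / 2 = 2 * p + 1 + 1 - p by lia,
    sum_block_card hN (by lia), sum_transposed_block_card hN (by lia), coarser, square]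
  push_cast
  ring

/-- For odd `k` and `N = 2^m` with `m > k`, the chosen non-redundant basis of the multiscale
sparse grid space `V^{(k)}_{N,N}` has exactly `(k+2)·N²/2^{k+1} − 2N + 1` elements. -/
theorem multiscale_basis_count_odd (k m N : ℕ) (hodd : k % 2 = 1) (hkm : k < m)
    (hN : N = 2 ^ m) :
    (∑ l ∈ range ((k - 1) / 2 + 1),
        ((N / 2 ^ (l + 1) : ℕ) : ℤ) * (((N / 2 ^ (k - l) : ℕ) : ℤ) - 1)) +
      (((N / 2 ^ ((k + 1) / 2) : ℕ) : ℤ) - 1) * (((N / 2 ^ ((k - 1) / 2) : ℕ) : ℤ) - 1) +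
      (∑ l ∈ Finset.Icc ((k + 3) / 2) k,
        (((N / 2 ^ l : ℕ) : ℤ) - 1) * ((N / 2 ^ (k - l + 1) : ℕ) : ℤ)) =
      ((k : ℤ) + 2) * ((N ^ 2 / 2 ^ (k + 1) : ℕ) : ℤ) - 2 * (N : ℤ) + 1 := by
  subst hN
  exact multiscale_basis_count_odd_general k _ hodd (pow_dvd_pow 2 hkm.le)
end
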